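/- Let m ≥ 1 and let a_1, …, a_{2m} be positive integers. Then the regular continued fraction [a_1, …, a_{2m}] equals, as a rational number, the negative continued fraction ⟦a_1+1, 2^{(a_2−1)}, a_3+2, 2^{(a_4−1)}, a_5+2, …, a_{2m−1}+2, 2^{(a_{2m}−1)}⟧; the latter is well defined since all of its entries are ≥ 2. -/

import Mathlib

/-- The regular continued fraction `[a₁, …, a_m] = a₁ + 1/(a₂ + 1/(⋯ + 1/a_m))`. -/
def rcf : List ℤ → ℚ
  | [] => 0
  | [a] => (a : ℚ)
  | a :: b :: l => (a : ℚ) + (rcf (b :: l))⁻¹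

/-- The negative continued fraction `⟦c₁, …, c_k⟧ = c₁ − 1/(c₂ − 1/(⋯ − 1/c_k))`. -/
def ncf : List ℤ → ℚ
  | [] => 0
  | [c] => (c : ℚ)
  | c :: d :: l => (c : ℚ) - (ncf (d :: l))⁻¹

/-- Auxiliary: converts `(a₁, a₂, a₃, …)` to `(a₁+2, 2^(a₂−1), a₃+2, 2^(a₄−1), …)`. -/
def hzTail : List ℤ → List ℤ
  | [] => []
  | [a] => [a + 2]
  | a :: b :: l => (a + 2) :: (List.replicate (b - 1).toNat 2 ++ hzTail l)

/-- The Hirzebruch conversion: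
`(a₁, a₂, a₃, a₄, …) ↦ (a₁+1, 2^(a₂−1), a₃+2, 2^(a₄−1), …)`. -/
def hz : List ℤ → List ℤ
  | [] => []
  | [a] => [a + 1]
  | a :: b :: l => (a + 1) :: (List.replicate (b - 1).toNat 2 ++ hzTail l)

/-!
The map `x ↦ (1 - x⁻¹)⁻¹` conjugates `x ↦ 2 - x⁻¹` to the translation `x ↦ x + 1`, so a block of
`n` twos in a negative continued fraction adds `n` in the new coordinate. Starting from `1 + y`,
whose new coordinate is `1 + y⁻¹`, this gives
`⟦a + 1, 2^(b - 1), 1 + y⟧ = a + 1 / (b + 1 / y)`,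
which replaces two partial quotients of a regular continued fraction at a time.
-/

/-- The empty fraction has value `0`, and `0⁻¹ = 0`, so it acts as `∞` here and in `ncf_cons`. -/
theorem rcf_cons (a : ℤ) (l : List ℤ) : rcf (a :: l) = a + (rcf l)⁻¹ := by
  cases l <;> simp [rcf]

theorem ncf_cons (c : ℤ) (l : List ℤ) : ncf (c :: l) = c - (ncf l)⁻¹ := by
  cases l <;> simp [ncf]

theorem one_lt_ncf_cons {c : ℤ} {l : List ℤ} (hc : 2 ≤ c) (hl : (ncf l)⁻¹ < 1) :
    1 < ncf (c :: l) := by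
  have hc' : (2 : ℚ) ≤ c := mod_cast hc
  rw [ncf_cons]
  linarith

theorem inv_ncf_lt_one {l : List ℤ} (hl : ∀ c ∈ l, 2 ≤ c) : (ncf l)⁻¹ < 1 := by
  induction l with
  | nil => simp [ncf]
  | cons c l ih =>
    rw [List.forall_mem_cons] at hl
    exact inv_lt_one_of_one_lt₀ (one_lt_ncf_cons hl.1 (ih hl.2))

theorem inv_one_sub_inv_two_sub {K : Type*} [Field K] {z : K} (h₁ : 1 - z ≠ 0) (h₂ : 2 - z ≠ 0) :
    (1 - (2 - z)⁻¹)⁻¹ = 1 + (1 - z)⁻¹ := by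
  have h : 1 - (2 - z)⁻¹ = (1 - z) / (2 - z) := by
    field_simp
    ring
  rw [h, inv_div]
  field_simp
  ring

theorem inv_one_sub_inv_add_one {K : Type*} [Field K] {y : K} (h₀ : y ≠ 0) (h₁ : y + 1 ≠ 0) :
    (1 - (y + 1)⁻¹)⁻¹ = 1 + y⁻¹ := by
  have h : 1 - (y + 1)⁻¹ = y / (y + 1) := by
    field_simp
    ring
  rw [h, inv_div]
  field_simp

theorem inv_one_sub_inv_ncf_replicate_two_append (n : ℕ) {l : List ℤ} (hl : ∀ c ∈ l, 2 ≤ c) :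
    (1 - (ncf (List.replicate n 2 ++ l))⁻¹)⁻¹ = n + (1 - (ncf l)⁻¹)⁻¹ := by
  induction n with
  | zero => simp
  | succ n ih =>
    have hlt : (ncf (List.replicate n 2 ++ l))⁻¹ < 1 := inv_ncf_lt_one fun c hc ↦
      (List.mem_append.1 hc).elim (fun h ↦ (List.eq_of_mem_replicate h).ge) (hl c)
    rw [List.replicate_succ, List.cons_append, ncf_cons, Int.cast_ofNat,
      inv_one_sub_inv_two_sub (by linarith) (by linarith), ih]
    push_cast
    ring

theorem two_le_of_mem_hzTail {l : List ℤ} (hl : ∀ x ∈ l, 0 ≤ x) : ∀ c ∈ hzTail l, 2 ≤ c := by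
  induction l using hzTail.induct with
  | case1 => simp [hzTail]
  | case2 a => simpa [hzTail] using hl
  | case3 a b l ih =>
    simp only [List.forall_mem_cons] at hl
    simp only [hzTail, List.forall_mem_cons, List.forall_mem_append]
    exact ⟨by linarith, fun c hc ↦ (List.eq_of_mem_replicate hc).ge, ih hl.2.2⟩

theorem two_le_of_mem_hz {l : List ℤ} (hl : ∀ x ∈ l, 1 ≤ x) : ∀ c ∈ hz l, 2 ≤ c := by
  match l with
  | [] => simp [hz]
  | [a] =>
    simp only [hz, List.forall_mem_singleton] at hl ⊢
    linarith
  | a :: b :: l =>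
    simp only [List.forall_mem_cons] at hl
    simp only [hz, List.forall_mem_cons, List.forall_mem_append]
    exact ⟨by linarith, fun c hc ↦ (List.eq_of_mem_replicate hc).ge,
      two_le_of_mem_hzTail fun x hx ↦ zero_le_one.trans (hl.2.2 x hx)⟩

theorem ncf_hzTail_cons (a : ℤ) (l : List ℤ) : ncf (hzTail (a :: l)) = ncf (hz (a :: l)) + 1 := by
  cases l <;> simp only [hzTail, hz, ncf_cons] <;> push_cast <;> ring

theorem one_lt_ncf_hzTail_cons {a : ℤ} {l : List ℤ} (hl : ∀ x ∈ a :: l, 0 ≤ x) :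
    1 < ncf (hzTail (a :: l)) := by
  have h := two_le_of_mem_hzTail hl
  cases l <;> rw [hzTail, List.forall_mem_cons] at h <;>
    exact one_lt_ncf_cons h.1 (inv_ncf_lt_one h.2)

theorem inv_one_sub_inv_ncf_hzTail {l : List ℤ} (hl : ∀ x ∈ l, 0 ≤ x) :
    (1 - (ncf (hzTail l))⁻¹)⁻¹ = 1 + (ncf (hz l))⁻¹ := by
  cases l with
  | nil => simp [hzTail, hz, ncf]
  | cons a l =>
    have h := one_lt_ncf_hzTail_cons hl
    rw [ncf_hzTail_cons] at h ⊢
    exact inv_one_sub_inv_add_one (by linarith) (by linarith)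

theorem ncf_hz_cons_cons (a : ℤ) {b : ℤ} (hb : 1 ≤ b) {l : List ℤ} (hl : ∀ x ∈ l, 0 ≤ x) :
    ncf (hz (a :: b :: l)) = a + (b + (ncf (hz l))⁻¹)⁻¹ := by
  have hcast : ((b - 1).toNat : ℚ) = b - 1 := mod_cast Int.toNat_of_nonneg (sub_nonneg.2 hb)
  have hblock : (1 - (ncf (List.replicate (b - 1).toNat 2 ++ hzTail l))⁻¹)⁻¹ =
      b + (ncf (hz l))⁻¹ := by
    rw [inv_one_sub_inv_ncf_replicate_two_append _ (two_le_of_mem_hzTail hl),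
      inv_one_sub_inv_ncf_hzTail hl, hcast]
    ring
  rw [hz, ncf_cons, ← hblock, inv_inv]
  push_cast
  ring

theorem rcf_eq_ncf_hz {l : List ℤ} (heven : Even l.length) (hl : ∀ x ∈ l, 1 ≤ x) :
    rcf l = ncf (hz l) := by
  induction l using hzTail.induct with
  | case1 => rfl
  | case2 a => simp at heven
  | case3 a b l ih =>
    have heven' : Even l.length := by simpa [Nat.even_add_one] using heven
    simp only [List.forall_mem_cons] at hl
    obtain ⟨-, hb, hl⟩ := hl
    rw [rcf_cons, rcf_cons, ih heven' hl,
      ncf_hz_cons_cons a hb fun x hx ↦ zero_le_one.trans (hl x hx)]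

/-- for positive integers `a₁, …, a_{2m}` (`m ≥ 1`), the regular
continued fraction `[a₁, …, a_{2m}]` equals the negative continued fraction
`⟦a₁+1, 2^(a₂−1), a₃+2, 2^(a₄−1), …, a_{2m−1}+2, 2^(a_{2m}−1)⟧`, all of
whose entries are ≥ 2. -/
theorem stmt0 (m : ℕ) (hm : 1 ≤ m) (a : List ℤ) (hlen : a.length = 2 * m)
    (ha : ∀ x ∈ a, 1 ≤ x) :
    (∀ c ∈ hz a, 2 ≤ c) ∧ rcf a = ncf (hz a) :=
  ⟨two_le_of_mem_hz ha, rcf_eq_ncf_hz (hlen ▸ even_two_mul m) ha⟩
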